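/- Up to similarity there is exactly one strictly convex equilateral pentagon ABCDE whose interior angles satisfy 2β + γ = 2π and 2δ + α = 2π: such a pentagon exists, and any two such pentagons with unit side length are congruent (related by an isometry of the plane, possibly orientation-reversing). -/

import Mathlib

/-!
Identify the plane with `ℂ` and call the quotient of consecutive edges of the pentagon the turn at
their common vertex. For an equilateral pentagon it is a unit number whose argument is the exterior
angle, so with `z` and `w` the turns at `B` and `D` the angle conditions say that the turns at `C`
and `A` are `-z̄²` and `-w̄²`. The edges relative to `AB` are therefore `1, z, -z̄, -z̄w, -w²`, and
the pentagon closes up exactly when `1 + z - z̄ - z̄w - w² = 0`.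

Eliminating `w²` between this equation and its conjugate leaves an equation linear in `w`, which
expresses `w` through `z`. Nothing is lost: the elimination combines the gap and its conjugate with
coefficients of different absolute values, so it vanishes only if the gap does. The remaining
condition `|w| = 1` is a quartic equation for `Re z`, which has exactly one root in `(0, 1)`, where
`Re z` must lie because the turn at `C` is to the left. Hence `(z, w)` exists and is unique, and the
edge `AB` together with `(z, w)` determines all vertices. The pentagon so obtained is convex because
`w` turns out to lie in the open first quadrant, like `z`.
-/

open EuclideanGeometry

/-- Signed area determinant of two plane vectors. -/
noncomputable def det2 (u v : EuclideanSpace ℝ (Fin 2)) : ℝ :=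
  u 0 * v 1 - u 1 * v 0

/-- `R` lies strictly to the left of the directed line from `P` to `Q`. -/
def SLeft (P Q R : EuclideanSpace ℝ (Fin 2)) : Prop :=
  0 < det2 (Q - P) (R - P)

/-- The five points are in strictly convex position, listed in counterclockwise
cyclic order along their convex hull (in particular no three are collinear):
for every directed edge of the pentagon, all remaining vertices lie strictly to its left. -/
def CcwConvex5 (A B C D E : EuclideanSpace ℝ (Fin 2)) : Prop :=
  SLeft A B C ∧ SLeft A B D ∧ SLeft A B E ∧
  SLeft B C D ∧ SLeft B C E ∧ SLeft B C A ∧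
  SLeft C D E ∧ SLeft C D A ∧ SLeft C D B ∧
  SLeft D E A ∧ SLeft D E B ∧ SLeft D E C ∧
  SLeft E A B ∧ SLeft E A C ∧ SLeft E A D

/-- The five points are in strictly convex position, listed in cyclic order
(either orientation) along their convex hull, with no three collinear. -/
def ConvexPos5 (A B C D E : EuclideanSpace ℝ (Fin 2)) : Prop :=
  CcwConvex5 A B C D E ∨ CcwConvex5 E D C B A

/-- The pentagon `ABCDE` is equilateral. -/
def Equilateral5 (A B C D E : EuclideanSpace ℝ (Fin 2)) : Prop :=
  dist A B = dist B C ∧ dist B C = dist C D ∧ dist C D = dist D E ∧ dist D E = dist E A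

open Complex Set
open scoped ComplexConjugate Real

/-! ### The closing equation -/

/-- The displacement by which a chain of unit edges `1, z, -z̄, -z̄w, -w²` fails to close up. These
are the edges `AB, BC, CD, DE, EA` of a pentagon of the required type, measured relative to `AB`,
where `z` and `w` are the turns at `B` and `D`. -/
noncomputable def closingGap (z w : ℂ) : ℂ :=
  1 + z - conj z - conj z * w - w ^ 2

/-- The turns `z` at `B` and `w` at `D` of a closed pentagon of the required type with left turns
at `B` and `C`. The latter is `0 < z.re`, as the turn at `C` is `-z̄²`. -/
structure IsClosingPair (z w : ℂ) : Prop where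
  norm_left : ‖z‖ = 1
  norm_right : ‖w‖ = 1
  re_pos : 0 < z.re
  im_pos : 0 < z.im
  closing : closingGap z w = 0

/-- The only turn at `D` that can close up a pentagon with the turn `z` at `B`. -/
noncomputable def partnerTurn (z : ℂ) : ℂ :=
  ⟨(z.re ^ 2 + z.re - 1) / (2 * z.im ^ 2), z.re / (2 * z.im)⟩

/-- The quartic whose roots in `(0, 1)` are the possible real parts `-cos β` of the turn at `B`. -/
def turnQuartic (x : ℝ) : ℝ :=
  4 * x ^ 4 - 2 * x ^ 3 - 8 * x ^ 2 + 2 * x + 3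

lemma re_sq_add_im_sq_eq_one {z : ℂ} (hz : ‖z‖ = 1) : z.re ^ 2 + z.im ^ 2 = 1 := by
  rw [← sq_norm_sub_sq_im, hz]
  ring

lemma re_lt_one_of_im_pos {z : ℂ} (hz : ‖z‖ = 1) (him : 0 < z.im) : z.re < 1 := by
  nlinarith [re_sq_add_im_sq_eq_one hz]

lemma mul_conj_eq_one {z : ℂ} (hz : ‖z‖ = 1) : z * conj z = 1 := by
  rw [mul_conj', hz, ofReal_one, one_pow]

lemma closingGap_re (z w : ℂ) :
    (closingGap z w).re =
      1 - (w.re * z.re + w.im * z.im) - (w ^ 2).re := by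
  simp only [closingGap, sub_re, add_re, mul_re, one_re, conj_re, conj_im]
  ring

lemma closingGap_im (z w : ℂ) :
    (closingGap z w).im =
      2 * z.im - (w.im * z.re - w.re * z.im) - (w ^ 2).im := by
  simp only [closingGap, sub_im, add_im, mul_im, one_im, conj_re, conj_im]
  ring

lemma partnerTurn_mul {z : ℂ} (hz : ‖z‖ = 1) (him : z.im ≠ 0) :
    -(z - conj z) ^ 2 * partnerTurn z = z ^ 2 + z + conj z - 1 := by
  have hsq := re_sq_add_im_sq_eq_one hz
  apply Complex.ext <;>
    simp only [partnerTurn, sq, neg_re, neg_im, sub_re, sub_im, add_re, add_im, mul_re, mul_im,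
      conj_re, conj_im, one_re, one_im] <;> field_simp
  · linear_combination 2 * z.im ^ 2 * hsq
  · ring

/-- Eliminates `w²` between the closing equation and its complex conjugate. -/
lemma closingGap_elimination {z w : ℂ} (hz : ‖z‖ = 1) (hw : ‖w‖ = 1) :
    w ^ 2 * conj (closingGap z w) + (1 - (z - conj z)) * closingGap z w =
      w * conj (-(z - conj z) ^ 2 * w - (z ^ 2 + z + conj z - 1)) := by
  simp only [closingGap, map_neg, map_sub, map_add, map_mul, map_pow, map_one, conj_conj]
  grind [mul_conj_eq_one hz, mul_conj_eq_one hw]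

lemma closingGap_eq_zero_iff {z w : ℂ} (hz : ‖z‖ = 1) (hw : ‖w‖ = 1) (him : z.im ≠ 0) :
    closingGap z w = 0 ↔ w = partnerTurn z := by
  have helim := closingGap_elimination hz hw
  rw [← partnerTurn_mul hz him, ← mul_sub] at helim
  have hcoeff : (z - conj z) ^ 2 ≠ 0 := by
    simpa [sub_conj] using him
  constructor
  · intro hgap
    have hw0 : w ≠ 0 := norm_ne_zero_iff.mp (by simp [hw])
    have hprod : -(z - conj z) ^ 2 * (w - partnerTurn z) = 0 := by
      simpa only [hgap, map_zero, mul_zero, add_zero, zero_eq_mul, hw0, false_or,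
        map_eq_zero] using helim
    exact sub_eq_zero.mp ((mul_eq_zero.mp hprod).resolve_left (neg_ne_zero.mpr hcoeff))
  · intro heq
    -- The two summands of the elimination have norms `‖gap‖` and `|1 - 2iy| ‖gap‖`.
    have hfactor : 1 < ‖1 - (z - conj z)‖ := by
      rw [← one_lt_sq_iff₀ (norm_nonneg _), ← normSq_eq_norm_sq]
      simp [normSq_apply, him]
    have hnorm : ‖closingGap z w‖ = ‖1 - (z - conj z)‖ * ‖closingGap z w‖ := by
      have := eq_neg_of_add_eq_zero_left (helim.trans (by simp [← heq]))
      simpa [hw] using congrArg norm this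
    by_contra hgap
    exact hfactor.ne (mul_right_cancel₀ (norm_ne_zero_iff.mpr hgap) ((one_mul _).trans hnorm))

lemma norm_partnerTurn_eq_one_iff {z : ℂ} (hz : ‖z‖ = 1) (him : z.im ≠ 0) :
    ‖partnerTurn z‖ = 1 ↔ turnQuartic z.re = 0 := by
  have hsq : z.im ^ 2 = 1 - z.re ^ 2 := eq_sub_of_add_eq' (re_sq_add_im_sq_eq_one hz)
  have hquartic : (z.re ^ 2 + z.re - 1) ^ 2 + z.re ^ 2 * z.im ^ 2 - 4 * (z.im ^ 2) ^ 2 =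
      -turnQuartic z.re := by
    rw [hsq, turnQuartic]
    ring
  have hnormSq : normSq (partnerTurn z) - 1 = -turnQuartic z.re / (4 * (z.im ^ 2) ^ 2) := by
    rw [← hquartic, partnerTurn, normSq_mk]
    field_simp
    ring
  rw [norm_def, Real.sqrt_eq_one, ← sub_eq_zero, hnormSq]
  simp [him]

lemma turnQuartic_pos {x : ℝ} (h₀ : 0 ≤ x) (h₁ : x ≤ 7 / 10) : 0 < turnQuartic x := by
  unfold turnQuartic
  nlinarith [mul_nonneg h₀ (sub_nonneg.2 h₁), mul_nonneg (mul_nonneg h₀ h₀) (sub_nonneg.2 h₁),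
    sq_nonneg (x ^ 2 - 1 / 2), sq_nonneg (x - 7 / 10)]

lemma turnQuartic_strictAntiOn : StrictAntiOn turnQuartic (Icc (7 / 10) 1) := by
  rintro s ⟨hs, -⟩ t ⟨-, ht⟩ hst
  have hsum : 1 < s ^ 2 + s * t + t ^ 2 := by nlinarith
  have hcubic : 0 ≤ (s + t) * (2 - s ^ 2 - t ^ 2) := mul_nonneg (by linarith) (by nlinarith)
  have hquotient : turnQuartic s - turnQuartic t =
      (t - s) * (4 * ((s + t) * (2 - s ^ 2 - t ^ 2)) + 2 * (s ^ 2 + s * t + t ^ 2) - 2) := by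
    unfold turnQuartic
    ring
  have hpos : 0 < turnQuartic s - turnQuartic t :=
    hquotient ▸ mul_pos (sub_pos.mpr hst) (by linarith)
  exact sub_pos.mp hpos

lemma existsUnique_turnQuartic_root : ∃! x, x ∈ Ioo 0 1 ∧ turnQuartic x = 0 := by
  have large_of_root {x : ℝ} (hx : x ∈ Ioo 0 1 ∧ turnQuartic x = 0) : x ∈ Icc (7 / 10) 1 :=
    ⟨le_of_not_ge fun h ↦ (turnQuartic_pos hx.1.1.le h).ne' hx.2, hx.1.2.le⟩
  have hcont : ContinuousOn turnQuartic (Icc 0 1) := by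
    unfold turnQuartic
    fun_prop
  obtain ⟨x, hx, hroot⟩ : 0 ∈ turnQuartic '' Ioo 0 1 :=
    intermediate_value_Ioo' zero_le_one hcont (by norm_num [turnQuartic])
  refine ⟨x, ⟨hx, hroot⟩, fun t ht ↦ ?_⟩
  exact turnQuartic_strictAntiOn.injOn (large_of_root ht) (large_of_root ⟨hx, hroot⟩)
    (ht.2.trans hroot.symm)

namespace IsClosingPair

variable {z w : ℂ}

lemma eq_partnerTurn (h : IsClosingPair z w) : w = partnerTurn z :=
  (closingGap_eq_zero_iff h.norm_left h.norm_right h.im_pos.ne').mp h.closing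

lemma re_mem_Ioo (h : IsClosingPair z w) : z.re ∈ Ioo 0 1 :=
  ⟨h.re_pos, re_lt_one_of_im_pos h.norm_left h.im_pos⟩

lemma turnQuartic_re (h : IsClosingPair z w) : turnQuartic z.re = 0 := by
  rw [← norm_partnerTurn_eq_one_iff h.norm_left h.im_pos.ne', ← h.eq_partnerTurn, h.norm_right]

lemma unique {z' w' : ℂ} (h : IsClosingPair z w) (h' : IsClosingPair z' w') : z = z' ∧ w = w' := by
  have hre : z.re = z'.re := existsUnique_turnQuartic_root.unique
    ⟨h.re_mem_Ioo, h.turnQuartic_re⟩ ⟨h'.re_mem_Ioo, h'.turnQuartic_re⟩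
  have him : z.im = z'.im := (pow_left_inj₀ h.im_pos.le h'.im_pos.le two_ne_zero).mp <| by
    have hsq := re_sq_add_im_sq_eq_one h.norm_left
    rw [hre] at hsq
    linarith [re_sq_add_im_sq_eq_one h'.norm_left]
  obtain rfl : z = z' := Complex.ext hre him
  exact ⟨rfl, h.eq_partnerTurn.trans h'.eq_partnerTurn.symm⟩

lemma right_re_pos (h : IsClosingPair z w) : 0 < w.re := by
  have hlarge : 7 / 10 < z.re := lt_of_not_ge fun hsmall ↦
    (turnQuartic_pos h.re_pos.le hsmall).ne' h.turnQuartic_re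
  have him := h.im_pos
  rw [h.eq_partnerTurn, partnerTurn]
  exact div_pos (by nlinarith) (by positivity)

lemma right_im_pos (h : IsClosingPair z w) : 0 < w.im := by
  rw [h.eq_partnerTurn, partnerTurn]
  exact div_pos h.re_pos (mul_pos two_pos h.im_pos)

end IsClosingPair

lemma exists_isClosingPair : ∃ z w : ℂ, IsClosingPair z w := by
  obtain ⟨x, ⟨⟨hx₀, hx₁⟩, hroot⟩, -⟩ := existsUnique_turnQuartic_root
  have hpos : 0 < 1 - x ^ 2 := by nlinarith
  let z : ℂ := ⟨x, √(1 - x ^ 2)⟩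
  have him : 0 < z.im := Real.sqrt_pos.mpr hpos
  have hz : ‖z‖ = 1 := by
    rw [norm_def, Real.sqrt_eq_one, normSq_mk,
      Real.mul_self_sqrt hpos.le]
    ring
  have hw : ‖partnerTurn z‖ = 1 := (norm_partnerTurn_eq_one_iff hz him.ne').mpr hroot
  exact ⟨z, partnerTurn z, hz, hw, hx₀, him, (closingGap_eq_zero_iff hz hw him.ne').mpr rfl⟩

/-! ### Pentagons described by their turns -/

/-- The ratio of the edges `bc` and `ab` of a polygonal path: its argument is the exterior angle at
`b`, and its imaginary part is positive at a strict left turn. -/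
noncomputable def turn (a b c : ℂ) : ℂ :=
  (c - b) / (b - a)

lemma turn_conj (a b c : ℂ) : turn (conj a) (conj b) (conj c) = conj (turn a b c) := by
  simp only [turn, map_div₀, map_sub]

lemma turn_rev (a b c : ℂ) : turn c b a = (turn a b c)⁻¹ := by
  rw [turn, turn, inv_div, ← neg_sub b a, ← neg_sub c b, neg_div_neg_eq]

lemma turn_mul_sub {a b c : ℂ} (hab : a ≠ b) : turn a b c * (b - a) = c - b :=
  div_mul_cancel₀ _ (sub_ne_zero.mpr hab.symm)

lemma ne_of_turn_im_pos {a b c : ℂ} (h : 0 < (turn a b c).im) : a ≠ b := by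
  rintro rfl
  simp [turn] at h

lemma norm_turn_eq_one {a b c : ℂ} (hab : a ≠ b) (h : dist a b = dist b c) :
    ‖turn a b c‖ = 1 := by
  rw [turn, norm_div, ← dist_eq_norm, ← dist_eq_norm, dist_comm c, dist_comm b a, ← h]
  exact div_self (dist_ne_zero.mpr hab)

lemma angle_eq_pi_sub_arg_turn {a b c : ℂ} (h : 0 < (turn a b c).im) :
    ∠ a b c = π - (turn a b c).arg := by
  have hab : a - b ≠ 0 := sub_ne_zero.mpr (ne_of_turn_im_pos h)
  have hcb : c - b ≠ 0 := by
    intro hcb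
    simp [turn, hcb] at h
  have hneg : (c - b) / (a - b) = -turn a b c := by
    rw [turn, ← neg_sub b a, div_neg]
  rw [EuclideanGeometry.angle_comm, EuclideanGeometry.angle, vsub_eq_sub, vsub_eq_sub,
    angle_eq_abs_arg hcb hab, hneg, arg_neg_eq_arg_sub_pi_of_im_pos h,
    abs_of_nonpos (sub_nonpos.mpr (arg_le_pi _)), neg_sub]

lemma two_mul_arg_add_arg_eq_pi_iff {u v : ℂ} (hu : ‖u‖ = 1) (hv : ‖v‖ = 1) (hu_im : 0 < u.im)
    (hv_im : 0 < v.im) : 2 * u.arg + v.arg = π ↔ u ^ 2 * v = -1 := by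
  have exp_arg {t : ℂ} (ht : ‖t‖ = 1) : exp (t.arg * I) = t := by
    simpa [ht] using norm_mul_exp_arg_mul_I t
  have arg_mem {t : ℂ} (ht : 0 < t.im) : t.arg ∈ Ioo 0 π :=
    ⟨(arg_nonneg_iff.mpr ht.le).lt_of_ne fun h0 ↦ ht.ne' (arg_eq_zero_iff.mp h0.symm).2,
      arg_lt_pi_iff.mpr (.inr ht.ne')⟩
  have hprod : u ^ 2 * v = exp ((2 * u.arg + v.arg : ℝ) * I) := by
    push_cast
    rw [add_mul, exp_add, exp_arg hv, two_mul, add_mul, exp_add, exp_arg hu, sq]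
  constructor
  · intro h
    rw [hprod, h, exp_pi_mul_I]
  · intro h
    obtain ⟨hu₀, hu₁⟩ := arg_mem hu_im
    obtain ⟨hv₀, hv₁⟩ := arg_mem hv_im
    -- The sum lies in `(0, 3π)`, where `-1` is attained only at `π`.
    have hcos : Real.cos (2 * u.arg + v.arg - π) = 1 := by
      rw [Real.cos_sub_pi, ← exp_ofReal_mul_I_re, ← hprod, h, neg_re, one_re, neg_neg]
    linarith [(Real.cos_eq_one_iff_of_lt_of_lt (by linarith) (by linarith)).mp hcos]

lemma two_mul_angle_add_angle_eq_two_pi_iff {a b c d e f : ℂ} (hb : ‖turn a b c‖ = 1)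
    (he : ‖turn d e f‖ = 1) (hb_im : 0 < (turn a b c).im) (he_im : 0 < (turn d e f).im) :
    2 * ∠ a b c + ∠ d e f = 2 * π ↔ turn a b c ^ 2 * turn d e f = -1 := by
  rw [← two_mul_arg_add_arg_eq_pi_iff hb he hb_im he_im, angle_eq_pi_sub_arg_turn hb_im,
    angle_eq_pi_sub_arg_turn he_im]
  constructor <;> intro h <;> linarith

/-- A pentagon, not necessarily convex, that turns left at `b` and `c`, has equal sides around `b`
and around `d`, and satisfies the two angle conditions. -/
structure IsTypeSeven (a b c d e : ℂ) : Prop where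
  norm_turn_b : ‖turn a b c‖ = 1
  norm_turn_d : ‖turn c d e‖ = 1
  turn_b_im_pos : 0 < (turn a b c).im
  turn_c_im_pos : 0 < (turn b c d).im
  turn_b_turn_c : turn a b c ^ 2 * turn b c d = -1
  turn_d_turn_a : turn c d e ^ 2 * turn e a b = -1

namespace IsTypeSeven

variable {a b c d e : ℂ}

lemma ne_ab (h : IsTypeSeven a b c d e) : a ≠ b := ne_of_turn_im_pos h.turn_b_im_pos

lemma turn_c_eq (h : IsTypeSeven a b c d e) : turn b c d = -conj (turn a b c) ^ 2 := by
  linear_combination conj (turn a b c) ^ 2 * h.turn_b_turn_c -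
    (turn a b c * conj (turn a b c) + 1) * turn b c d * mul_conj_eq_one h.norm_turn_b

lemma c_eq (h : IsTypeSeven a b c d e) : c = a + (1 + turn a b c) * (b - a) := by
  linear_combination -turn_mul_sub (c := c) h.ne_ab

lemma d_eq (h : IsTypeSeven a b c d e) :
    d = a + (1 + turn a b c - conj (turn a b c)) * (b - a) := by
  have hcd := turn_mul_sub (c := d) (ne_of_turn_im_pos h.turn_c_im_pos)
  rw [h.turn_c_eq, ← turn_mul_sub (c := c) h.ne_ab] at hcd
  linear_combination h.c_eq - hcd -
    conj (turn a b c) * (b - a) * mul_conj_eq_one h.norm_turn_b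

lemma e_eq (h : IsTypeSeven a b c d e) : e = a + turn c d e ^ 2 * (b - a) := by
  have hea : e ≠ a := by
    rintro rfl
    simpa [turn] using h.turn_d_turn_a
  linear_combination turn c d e ^ 2 * turn_mul_sub (c := b) hea - (a - e) * h.turn_d_turn_a

lemma e_eq_of_edges (h : IsTypeSeven a b c d e) : e = a +
    (1 + turn a b c - conj (turn a b c) - conj (turn a b c) * turn c d e) * (b - a) := by
  have hcd : c ≠ d := by
    rintro rfl
    simpa [turn] using h.norm_turn_d
  linear_combination (1 + turn c d e) * h.d_eq - turn c d e * h.c_eq -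
    turn_mul_sub (c := e) hcd

lemma isClosingPair (h : IsTypeSeven a b c d e) : IsClosingPair (turn a b c) (turn c d e) where
  norm_left := h.norm_turn_b
  norm_right := h.norm_turn_d
  re_pos := by
    have him := h.turn_c_im_pos
    simp only [h.turn_c_eq, sq, neg_im, mul_im, conj_re, conj_im] at him
    exact pos_of_mul_pos_left (by linarith) h.turn_b_im_pos.le
  im_pos := h.turn_b_im_pos
  closing := by
    have hgap : closingGap (turn a b c) (turn c d e) * (b - a) = 0 := by
      unfold closingGap
      linear_combination h.e_eq - h.e_eq_of_edges
    exact (mul_eq_zero.mp hgap).resolve_right (sub_ne_zero.mpr h.ne_ab.symm)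

end IsTypeSeven

lemma exists_affineIsometryEquiv_of_dist_eq {a b a' b' : ℂ} (hab : a ≠ b)
    (h : dist a b = dist a' b') :
    ∃ ρ : ℂ ≃ᵃⁱ[ℝ] ℂ, ∀ t, ρ (a + t * (b - a)) = a' + t * (b' - a') := by
  have hba : b - a ≠ 0 := sub_ne_zero.mpr hab.symm
  have hnorm : ‖(b' - a') / (b - a)‖ = 1 := by
    rw [norm_div, ← dist_eq_norm, ← dist_eq_norm, dist_comm b' a', ← h, dist_comm b a]
    exact div_self (dist_ne_zero.mpr hab)
  let u : Circle := ⟨(b' - a') / (b - a), mem_sphere_zero_iff_norm.mpr hnorm⟩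
  refine ⟨((AffineIsometryEquiv.vaddConst ℝ a).symm.trans
    (rotation u).toAffineIsometryEquiv).trans (AffineIsometryEquiv.vaddConst ℝ a'), fun t ↦ ?_⟩
  have hu : (u : ℂ) = (b' - a') / (b - a) := rfl
  simp only [AffineIsometryEquiv.coe_trans, AffineIsometryEquiv.coe_vaddConst, vadd_eq_add,
    LinearIsometryEquiv.coe_toAffineIsometryEquiv, AffineIsometryEquiv.coe_vaddConst_symm,
    vsub_eq_sub, Function.comp_apply, add_sub_cancel_left, rotation_apply, hu]
  field_simp
  ring

lemma IsTypeSeven.exists_affineIsometryEquiv {a b c d e a' b' c' d' e' : ℂ}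
    (h : IsTypeSeven a b c d e) (h' : IsTypeSeven a' b' c' d' e') (hdist : dist a b = dist a' b') :
    ∃ ρ : ℂ ≃ᵃⁱ[ℝ] ℂ, ρ a = a' ∧ ρ b = b' ∧ ρ c = c' ∧ ρ d = d' ∧ ρ e = e' := by
  obtain ⟨ρ, hρ⟩ := exists_affineIsometryEquiv_of_dist_eq h.ne_ab hdist
  obtain ⟨hz, hw⟩ := h.isClosingPair.unique h'.isClosingPair
  refine ⟨ρ, by simpa using hρ 0, by simpa using hρ 1, ?_, ?_, ?_⟩
  · rw [h'.c_eq, h.c_eq, hρ, hz]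
  · rw [h'.d_eq, h.d_eq, hρ, hz]
  · rw [h'.e_eq, h.e_eq, hρ, hw]

/-! ### Transfer to the Euclidean plane -/

/-- The standard identification of the Euclidean plane with `ℂ`. -/
noncomputable def toComplex : EuclideanSpace ℝ (Fin 2) ≃ᵃⁱ[ℝ] ℂ :=
  orthonormalBasisOneI.repr.symm.toAffineIsometryEquiv

lemma toComplex_re (P : EuclideanSpace ℝ (Fin 2)) : (toComplex P).re = P 0 := by
  simp [toComplex]

lemma toComplex_im (P : EuclideanSpace ℝ (Fin 2)) : (toComplex P).im = P 1 := by
  simp [toComplex]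

lemma sLeft_iff_re_im (P Q R : EuclideanSpace ℝ (Fin 2)) :
    SLeft P Q R ↔ 0 < ((toComplex Q).re - (toComplex P).re) *
      ((toComplex R).im - (toComplex P).im) - ((toComplex Q).im - (toComplex P).im) *
      ((toComplex R).re - (toComplex P).re) := by
  simp only [SLeft, det2, PiLp.sub_apply, toComplex_re, toComplex_im]

lemma sLeft_iff_turn_im_pos (P Q R : EuclideanSpace ℝ (Fin 2)) :
    SLeft P Q R ↔ 0 < (turn (toComplex P) (toComplex Q) (toComplex R)).im := by
  set p := toComplex P
  set q := toComplex Q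
  set r := toComplex R
  have him : (turn p q r).im =
      ((q.re - p.re) * (r.im - p.im) - (q.im - p.im) * (r.re - p.re)) / normSq (q - p) := by
    rw [turn, div_im, sub_re, sub_im, sub_re, sub_im, ← sub_div]
    ring
  rw [sLeft_iff_re_im, him]
  rcases eq_or_ne q p with hqp | hqp
  · simp [p, q, hqp]
  · rw [div_pos_iff_of_pos_right (normSq_pos.mpr (sub_ne_zero.mpr hqp))]

lemma SLeft.turn_conj_im_pos {P Q R : EuclideanSpace ℝ (Fin 2)} (h : SLeft R Q P) :
    0 < (turn (conj (toComplex P)) (conj (toComplex Q)) (conj (toComplex R))).im := by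
  rw [sLeft_iff_turn_im_pos, turn_rev, inv_im] at h
  rw [turn_conj, conj_im]
  exact (div_pos_iff_of_pos_right (normSq_pos.mpr (by intro h0; simp [h0] at h))).mp h

/-- Clockwise pentagons are made counterclockwise by a reflection. -/
lemma ConvexPos5.exists_turn_im_pos {A B C D E : EuclideanSpace ℝ (Fin 2)}
    (h : ConvexPos5 A B C D E) :
    ∃ φ : EuclideanSpace ℝ (Fin 2) ≃ᵃⁱ[ℝ] ℂ,
      0 < (turn (φ A) (φ B) (φ C)).im ∧ 0 < (turn (φ B) (φ C) (φ D)).im ∧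
      0 < (turn (φ C) (φ D) (φ E)).im ∧ 0 < (turn (φ E) (φ A) (φ B)).im := by
  rcases h with h | h
  · obtain ⟨hABC, -, -, hBCD, -, -, hCDE, -, -, -, -, -, hEAB, -, -⟩ := h
    simp only [sLeft_iff_turn_im_pos] at hABC hBCD hCDE hEAB
    exact ⟨toComplex, hABC, hBCD, hCDE, hEAB⟩
  · obtain ⟨hEDC, -, -, hDCB, -, -, hCBA, -, -, hBAE, -, -, -, -, -⟩ := h
    exact ⟨toComplex.trans conjLIE.toAffineIsometryEquiv, hCBA.turn_conj_im_pos,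
      hDCB.turn_conj_im_pos, hEDC.turn_conj_im_pos, hBAE.turn_conj_im_pos⟩

lemma ConvexPos5.exists_isTypeSeven {A B C D E : EuclideanSpace ℝ (Fin 2)}
    (hconv : ConvexPos5 A B C D E) (heq : Equilateral5 A B C D E)
    (hBC : 2 * ∠ A B C + ∠ B C D = 2 * π) (hDA : 2 * ∠ C D E + ∠ E A B = 2 * π) :
    ∃ φ : EuclideanSpace ℝ (Fin 2) ≃ᵃⁱ[ℝ] ℂ, IsTypeSeven (φ A) (φ B) (φ C) (φ D) (φ E) := by
  obtain ⟨φ, hB, hC, hD, hA⟩ := hconv.exists_turn_im_pos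
  have angle_map (P Q R) : ∠ (φ P) (φ Q) (φ R) = ∠ P Q R := φ.toAffineIsometry.angle_map P Q R
  have norm_turn {P Q R} (hQ : 0 < (turn (φ P) (φ Q) (φ R)).im) (h : dist P Q = dist Q R) :
      ‖turn (φ P) (φ Q) (φ R)‖ = 1 :=
    norm_turn_eq_one (ne_of_turn_im_pos hQ) (by rwa [φ.dist_map, φ.dist_map])
  obtain ⟨hAB_BC, hBC_CD, hCD_DE, hDE_EA⟩ := heq
  have hEA_AB : dist E A = dist A B := (hAB_BC.trans (hBC_CD.trans (hCD_DE.trans hDE_EA))).symm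
  have nB := norm_turn hB hAB_BC
  have nD := norm_turn hD hCD_DE
  simp only [← angle_map] at hBC hDA
  exact ⟨φ, nB, nD, hB, hC,
    (two_mul_angle_add_angle_eq_two_pi_iff nB (norm_turn hC hBC_CD) hB hC).mp hBC,
    (two_mul_angle_add_angle_eq_two_pi_iff nD (norm_turn hA hEA_AB) hD hA).mp hDA⟩

/-! ### Existence -/

lemma two_mul_angle_add_angle_eq_two_pi {a b c d e f u : ℂ} (hu : ‖u‖ = 1) (hre : 0 < u.re)
    (him : 0 < u.im) (hb : turn a b c = u) (he : turn d e f = -conj u ^ 2) :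
    2 * ∠ a b c + ∠ d e f = 2 * π := by
  have he_im : 0 < (turn d e f).im := by
    rw [he, sq, neg_im, mul_im, conj_re, conj_im]
    linarith [mul_pos hre him]
  rw [two_mul_angle_add_angle_eq_two_pi_iff (hb ▸ hu) (by simp [he, hu]) (hb ▸ him) he_im, hb, he]
  linear_combination -(u * conj u + 1) * mul_conj_eq_one hu

namespace IsClosingPair

variable {z w : ℂ}

lemma closing_re (h : IsClosingPair z w) :
    1 - (w.re * z.re + w.im * z.im) = (w ^ 2).re := by
  rw [← sub_eq_zero, ← closingGap_re, h.closing, zero_re]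

lemma closing_im (h : IsClosingPair z w) :
    2 * z.im - (w.im * z.re - w.re * z.im) = (w ^ 2).im := by
  rw [← sub_eq_zero, ← closingGap_im, h.closing, zero_im]

lemma edge_de (h : IsClosingPair z w) : w ^ 2 - (1 + z - conj z) = -conj z * w := by
  have hgap := h.closing
  rw [closingGap] at hgap
  linear_combination -hgap

lemma turn_c (h : IsClosingPair z w) : turn 1 (1 + z) (1 + z - conj z) = -conj z ^ 2 := by
  have hz := mul_conj_eq_one h.norm_left
  rw [turn, sub_sub_cancel_left, add_sub_cancel_left, div_eq_iff (left_ne_zero_of_mul_eq_one hz)]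
  linear_combination conj z * hz

lemma turn_d (h : IsClosingPair z w) : turn (1 + z) (1 + z - conj z) (w ^ 2) = w := by
  have hz := right_ne_zero_of_mul_eq_one (mul_conj_eq_one h.norm_left)
  rw [turn, h.edge_de, sub_sub_cancel_left, mul_div_cancel_left₀ _ (neg_ne_zero.mpr hz)]

lemma turn_a (h : IsClosingPair z w) : turn (w ^ 2) 0 1 = -conj w ^ 2 := by
  have hw := mul_conj_eq_one h.norm_right
  rw [turn, sub_zero, zero_sub,
    div_eq_iff (neg_ne_zero.mpr (pow_ne_zero _ (left_ne_zero_of_mul_eq_one hw)))]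
  linear_combination -(w * conj w + 1) * hw

lemma right_sq_im_pos (h : IsClosingPair z w) : 0 < (w ^ 2).im := by
  rw [sq, mul_im, mul_comm w.im]
  linarith [mul_pos h.right_re_pos h.right_im_pos]

lemma right_sq_re_lt_one (h : IsClosingPair z w) : (w ^ 2).re < 1 := by
  rw [sq, mul_re]
  nlinarith [re_sq_add_im_sq_eq_one h.norm_right, h.right_im_pos]

/-- The determinant of the edges `CD` and `DE` is `Im w`. -/
lemma det_cde (h : IsClosingPair z w) :
    z.im * (1 - (w ^ 2).re) - z.re * ((w ^ 2).im - 2 * z.im) = w.im := by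
  linear_combination
    w.im * re_sq_add_im_sq_eq_one h.norm_left + z.im * h.closing_re + z.re * h.closing_im

/-- The determinant of the edges `DE` and `EA` is `Im (z w)`. -/
lemma det_dea (h : IsClosingPair z w) :
    (w ^ 2).im - 2 * z.im * (w ^ 2).re = w.im * z.re + w.re * z.im := by
  have hre : (w ^ 2).re = w.re ^ 2 - w.im ^ 2 := by rw [sq, mul_re, ← sq, ← sq]
  have him : (w ^ 2).im = 2 * w.re * w.im := by rw [sq, mul_im]; ring
  have hre' := h.closing_re
  have him' := h.closing_im
  rw [hre] at hre' ⊢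
  rw [him] at him' ⊢
  linear_combination 2 * w.re * w.im * hre' - (w.re ^ 2 - w.im ^ 2) * him' +
    (w.im * z.re + w.re * z.im) * re_sq_add_im_sq_eq_one h.norm_right

lemma ccwConvex5 (h : IsClosingPair z w) :
    CcwConvex5 (toComplex.symm 0) (toComplex.symm 1) (toComplex.symm (1 + z))
      (toComplex.symm (1 + z - conj z)) (toComplex.symm (w ^ 2)) := by
  have hx := h.re_pos
  have hy := h.im_pos
  have hu := sub_pos.mpr h.right_sq_re_lt_one
  have hv := h.right_sq_im_pos
  have hCDE := h.right_im_pos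
  rw [← h.det_cde] at hCDE
  have hDEA := add_pos (mul_pos h.right_im_pos hx) (mul_pos h.right_re_pos hy)
  rw [← h.det_dea] at hDEA
  simp only [CcwConvex5, sLeft_iff_re_im, AffineIsometryEquiv.apply_symm_apply, sub_re,
    sub_im, add_re, add_im, conj_re, conj_im, zero_re, zero_im, one_re, one_im]
  -- Each of the fifteen determinants is a positive combination of the quantities above and of the
  -- products below.
  refine ⟨?_, ?_, ?_, ?_, ?_, ?_, ?_, ?_, ?_, ?_, ?_, ?_, ?_, ?_, ?_⟩ <;>
    linarith [mul_pos hx hy, mul_pos hx hv, mul_pos hy hu]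

lemma dist_eq_one (h : IsClosingPair z w) :
    dist (0 : ℂ) 1 = 1 ∧ dist 1 (1 + z) = 1 ∧ dist (1 + z) (1 + z - conj z) = 1 ∧
      dist (1 + z - conj z) (w ^ 2) = 1 ∧ dist (w ^ 2) 0 = 1 := by
  refine ⟨?_, ?_, ?_, ?_, ?_⟩
  · rw [dist_zero_left, norm_one]
  · rw [dist_self_add_right, h.norm_left]
  · rw [dist_eq_norm, sub_sub_cancel, norm_conj, h.norm_left]
  · rw [dist_comm, dist_eq_norm, h.edge_de, norm_mul, norm_neg, norm_conj, h.norm_left,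
      h.norm_right, one_mul]
  · rw [dist_zero_right, norm_pow, h.norm_right, one_pow]

lemma two_mul_angle_b_add_angle_c (h : IsClosingPair z w) :
    2 * ∠ 0 1 (1 + z) + ∠ 1 (1 + z) (1 + z - conj z) = 2 * π :=
  two_mul_angle_add_angle_eq_two_pi h.norm_left h.re_pos h.im_pos (by simp [turn]) h.turn_c

lemma two_mul_angle_d_add_angle_a (h : IsClosingPair z w) :
    2 * ∠ (1 + z) (1 + z - conj z) (w ^ 2) + ∠ (w ^ 2) 0 1 = 2 * π :=
  two_mul_angle_add_angle_eq_two_pi h.norm_right h.right_re_pos h.right_im_pos h.turn_d h.turn_a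

end IsClosingPair

lemma exists_convex_equilateral_typeSeven :
    ∃ A B C D E : EuclideanSpace ℝ (Fin 2),
      ConvexPos5 A B C D E ∧ Equilateral5 A B C D E ∧
      2 * ∠ A B C + ∠ B C D = 2 * π ∧ 2 * ∠ C D E + ∠ E A B = 2 * π := by
  obtain ⟨z, w, h⟩ := exists_isClosingPair
  obtain ⟨hAB, hBC, hCD, hDE, hEA⟩ := h.dist_eq_one
  have angle_map (p q r : ℂ) :
      ∠ (toComplex.symm p) (toComplex.symm q) (toComplex.symm r) = ∠ p q r :=
    toComplex.symm.toAffineIsometry.angle_map p q r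
  refine ⟨_, _, _, _, _, .inl h.ccwConvex5, ?_, ?_, ?_⟩
  · simp only [Equilateral5, AffineIsometryEquiv.dist_map, hAB, hBC, hCD, hDE, hEA, and_self]
  · simpa only [angle_map] using h.two_mul_angle_b_add_angle_c
  · simpa only [angle_map] using h.two_mul_angle_d_add_angle_a

theorem type7_exists_unique_up_to_congruence :
    (∃ A B C D E : EuclideanSpace ℝ (Fin 2),
      ConvexPos5 A B C D E ∧ Equilateral5 A B C D E ∧
      2 * ∠ A B C + ∠ B C D = 2 * Real.pi ∧
      2 * ∠ C D E + ∠ E A B = 2 * Real.pi) ∧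
    (∀ A B C D E A' B' C' D' E' : EuclideanSpace ℝ (Fin 2),
      ConvexPos5 A B C D E → Equilateral5 A B C D E → dist A B = 1 →
      2 * ∠ A B C + ∠ B C D = 2 * Real.pi →
      2 * ∠ C D E + ∠ E A B = 2 * Real.pi →
      ConvexPos5 A' B' C' D' E' → Equilateral5 A' B' C' D' E' → dist A' B' = 1 →
      2 * ∠ A' B' C' + ∠ B' C' D' = 2 * Real.pi →
      2 * ∠ C' D' E' + ∠ E' A' B' = 2 * Real.pi →
      ∃ f : EuclideanSpace ℝ (Fin 2) ≃ᵢ EuclideanSpace ℝ (Fin 2),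
        f A = A' ∧ f B = B' ∧ f C = C' ∧ f D = D' ∧ f E = E') := by
  refine ⟨exists_convex_equilateral_typeSeven, ?_⟩
  intro A B C D E A' B' C' D' E' hconv heq hAB hBC hDA hconv' heq' hAB' hBC' hDA'
  obtain ⟨φ, hφ⟩ := hconv.exists_isTypeSeven heq hBC hDA
  obtain ⟨ψ, hψ⟩ := hconv'.exists_isTypeSeven heq' hBC' hDA'
  have hdist : dist (φ A) (φ B) = dist (ψ A') (ψ B') := by
    rw [φ.dist_map, ψ.dist_map, hAB, hAB']
  obtain ⟨ρ, hA, hB, hC, hD, hE⟩ := hφ.exists_affineIsometryEquiv hψ hdist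
  refine ⟨((φ.trans ρ).trans ψ.symm).toIsometryEquiv, ?_⟩
  simp [hA, hB, hC, hD, hE]
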